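/- (The generalized Bayes rule cannot sharpen vacuous prior intervals.) Let Π be a nonempty set of probability measures on a measurable space Ω, and let A be measurable with ℓ(A) = 0 and u(A) = 1 (a vacuous prior interval). Then for every measurable B with ℓ(B) > 0: ℓ_GB(A|B) = 0 and u_GB(A|B) = 1. -/

import Mathlib

open MeasureTheory

variable {Ω : Type*} [MeasurableSpace Ω]

/-- Lower probability of a set of measures: `ℓ(A) = inf_{P ∈ 𝔓} P(A)`. -/
noncomputable def lowP (𝔓 : Set (Measure Ω)) (A : Set Ω) : ℝ :=
  ⨅ P : 𝔓, (P.1 A).toReal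

/-- Upper probability of a set of measures: `u(A) = sup_{P ∈ 𝔓} P(A)`. -/
noncomputable def upP (𝔓 : Set (Measure Ω)) (A : Set Ω) : ℝ :=
  ⨆ P : 𝔓, (P.1 A).toReal

/-- Generalized Bayes conditional lower probability: `ℓ_GB(A|B) = inf_P P(A∩B)/P(B)`. -/
noncomputable def lowGB (𝔓 : Set (Measure Ω)) (A B : Set Ω) : ℝ :=
  ⨅ P : 𝔓, (P.1 (A ∩ B)).toReal / (P.1 B).toReal

/-- Generalized Bayes conditional upper probability: `u_GB(A|B) = sup_P P(A∩B)/P(B)`. -/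
noncomputable def upGB (𝔓 : Set (Measure Ω)) (A B : Set Ω) : ℝ :=
  ⨆ P : 𝔓, (P.1 (A ∩ B)).toReal / (P.1 B).toReal

/-- Dempster conditional upper probability: `u_D(A|B) = u(A∩B)/u(B)`. -/
noncomputable def upD (𝔓 : Set (Measure Ω)) (A B : Set Ω) : ℝ :=
  upP 𝔓 (A ∩ B) / upP 𝔓 B

/-- Dempster conditional lower probability: `ℓ_D(A|B) = 1 - u_D(Aᶜ|B)`. -/
noncomputable def lowD (𝔓 : Set (Measure Ω)) (A B : Set Ω) : ℝ :=
  1 - upD 𝔓 Aᶜ B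

/-- Geometric conditional lower probability: `ℓ_G(A|B) = ℓ(A∩B)/ℓ(B)`. -/
noncomputable def lowG (𝔓 : Set (Measure Ω)) (A B : Set Ω) : ℝ :=
  lowP 𝔓 (A ∩ B) / lowP 𝔓 B

/-- Geometric conditional upper probability: `u_G(A|B) = 1 - ℓ_G(Aᶜ|B)`. -/
noncomputable def upG (𝔓 : Set (Measure Ω)) (A B : Set Ω) : ℝ :=
  1 - lowG 𝔓 Aᶜ B

/-- Theorem 5.8, generalized Bayes part: the generalized Bayes rule cannot
sharpen a vacuous prior interval: if `ℓ(A) = 0` and `u(A) = 1` then `ℓ_GB(A|B) = 0` and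
`u_GB(A|B) = 1` for every measurable `B` with `ℓ(B) > 0`. -/
theorem genBayes_keeps_vacuous
    (𝔓 : Set (Measure Ω)) (hne : 𝔓.Nonempty)
    (hprob : ∀ P ∈ 𝔓, IsProbabilityMeasure P)
    (A : Set Ω) (hA : MeasurableSet A)
    (hlA : lowP 𝔓 A = 0) (huA : upP 𝔓 A = 1) :
    ∀ B : Set Ω, MeasurableSet B → 0 < lowP 𝔓 B →
      lowGB 𝔓 A B = 0 ∧ upGB 𝔓 A B = 1 := by
  intro B hB hlB
  have hne' : Nonempty 𝔓 := hne.to_subtype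
  have hbdd : ∀ S : Set Ω, BddBelow (Set.range fun P : 𝔓 => (P.1 S).toReal) := fun S =>
    ⟨0, by rintro _ ⟨P, rfl⟩; exact ENNReal.toReal_nonneg⟩
  have hl : ∀ P : 𝔓, lowP 𝔓 B ≤ (P.1 B).toReal := fun P => ciInf_le (hbdd B) P
  have hpos : ∀ P : 𝔓, 0 < (P.1 B).toReal := fun P => lt_of_lt_of_le hlB (hl P)
  have hmA : ∀ P : 𝔓, (P.1 (A ∩ B)).toReal ≤ (P.1 A).toReal := fun P => by
    haveI := hprob P.1 P.2
    exact ENNReal.toReal_mono (measure_ne_top _ _) (measure_mono Set.inter_subset_left)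
  have hmB : ∀ P : 𝔓, (P.1 (A ∩ B)).toReal ≤ (P.1 B).toReal := fun P => by
    haveI := hprob P.1 P.2
    exact ENNReal.toReal_mono (measure_ne_top _ _) (measure_mono Set.inter_subset_right)
  have hinc : ∀ P : 𝔓,
      (P.1 A).toReal + (P.1 B).toReal ≤ 1 + (P.1 (A ∩ B)).toReal := fun P => by
    haveI := hprob P.1 P.2
    have h1 := measureReal_union_add_inter (μ := P.1) (s := A) hB
    have h2 : P.1.real (A ∪ B) ≤ 1 := measureReal_le_one
    simp only [Measure.real] at h1 h2
    linarith
  have hr0 : ∀ P : 𝔓, 0 ≤ (P.1 (A ∩ B)).toReal / (P.1 B).toReal := fun P =>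
    div_nonneg ENNReal.toReal_nonneg ENNReal.toReal_nonneg
  have hr1 : ∀ P : 𝔓, (P.1 (A ∩ B)).toReal / (P.1 B).toReal ≤ 1 := fun P =>
    (div_le_one (hpos P)).2 (hmB P)
  constructor
  · refine ciInf_eq_of_forall_ge_of_forall_gt_exists_lt hr0 fun ε hε => ?_
    have h : lowP 𝔓 A < ε * lowP 𝔓 B := by rw [hlA]; positivity
    obtain ⟨P, hP⟩ := exists_lt_of_ciInf_lt h
    refine ⟨P, ?_⟩
    rw [div_lt_iff₀ (hpos P)]
    have := mul_le_mul_of_nonneg_left (hl P) hε.le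
    linarith [hmA P]
  · refine ciSup_eq_of_forall_le_of_forall_lt_exists_gt hr1 fun w hw => ?_
    have h : 1 - (1 - w) * lowP 𝔓 B < upP 𝔓 A := by
      rw [huA]
      have := mul_pos (sub_pos.2 hw) hlB
      linarith
    obtain ⟨P, hP⟩ := exists_lt_of_lt_ciSup h
    refine ⟨P, ?_⟩
    rw [lt_div_iff₀ (hpos P)]
    have := mul_le_mul_of_nonneg_left (hl P) (sub_pos.2 hw).le
    linarith [hinc P]
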